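/- If a mechanism is a composition of Gaussian mechanisms satisfying ρ-zCDP (i.e., each Gaussian mechanism with sensitivity Δᵢ and noise scale σᵢ contributes ρᵢ = Δᵢ²/(2σᵢ²) with Σρᵢ = ρ), then it satisfies μ-GDP with μ = √(2ρ). -/

import Mathlib

open MeasureTheory ProbabilityTheory Real Set

/-- Standard normal CDF. -/
noncomputable def Phi (x : ℝ) : ℝ := ((gaussianReal 0 1) (Set.Iic x)).toReal

/-- Inverse of the standard normal CDF (on (0,1)). -/
noncomputable def PhiInv (p : ℝ) : ℝ := sInf {x : ℝ | p ≤ Phi x}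

/-- Gaussian tradeoff function `G_μ`, extended by `G_μ(0)=1`, `G_μ(1)=0`. -/
noncomputable def Gmu (μ α : ℝ) : ℝ :=
  if α ≤ 0 then 1 else if 1 ≤ α then 0 else Phi (PhiInv (1 - α) - μ)

/-- Optimal hypothesis-testing tradeoff function: minimal type-II error over
randomized tests with type-I error at most `α`. -/
noncomputable def tradeoff {Ω : Type*} [MeasurableSpace Ω] (P Q : Measure Ω) (α : ℝ) : ℝ :=
  sInf { b : ℝ | ∃ φ : Ω → ℝ, Measurable φ ∧ (∀ ω, φ ω ∈ Set.Icc (0:ℝ) 1) ∧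
    (∫ ω, φ ω ∂P) ≤ α ∧ b = 1 - ∫ ω, φ ω ∂Q }

/-- Rényi divergence of order `a > 1`. -/
noncomputable def renyiDiv {Ω : Type*} [MeasurableSpace Ω] (a : ℝ) (P Q : Measure Ω) : ℝ :=
  (a - 1)⁻¹ * Real.log (∫ ω, ((Measure.rnDeriv P Q ω).toReal) ^ a ∂Q)

/-- `(ε,δ)`-differential privacy. -/
def IsDP {X Ω : Type*} [MeasurableSpace Ω] (M : X → Measure Ω) (Neighbor : X → X → Prop)
    (ε δ : ℝ) : Prop :=
  ∀ x x', Neighbor x x' → ∀ S : Set Ω, MeasurableSet S →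
    ((M x) S).toReal ≤ Real.exp ε * ((M x') S).toReal + δ

/-- `ρ`-zero-concentrated differential privacy. -/
def IsZCDP {X Ω : Type*} [MeasurableSpace Ω] (M : X → Measure Ω) (Neighbor : X → X → Prop)
    (ρ : ℝ) : Prop :=
  ∀ x x', Neighbor x x' → ∀ a : ℝ, 1 < a → renyiDiv a (M x) (M x') ≤ ρ * a

/-- `μ`-Gaussian differential privacy. -/
def IsGDP {X Ω : Type*} [MeasurableSpace Ω] (M : X → Measure Ω) (Neighbor : X → X → Prop)
    (μ : ℝ) : Prop :=
  ∀ x x', Neighbor x x' → ∀ α ∈ Set.Icc (0:ℝ) 1, Gmu μ α ≤ tradeoff (M x) (M x') α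

lemma Phi_eq_cdf : Phi = fun x => cdf (gaussianReal 0 1) x := by
  ext x; rw [cdf_eq_real]; rfl

lemma Phi_mono : Monotone Phi := by
  rw [Phi_eq_cdf]; exact monotone_cdf _

lemma Phi_continuous : Continuous Phi := by
  rw [Phi_eq_cdf, continuous_iff_continuousAt]
  intro x
  have h := (cdf (gaussianReal 0 1)).measure_singleton x
  rw [measure_cdf] at h
  have := nullSingletonClass_gaussianReal (μ := 0) (v := 1) one_ne_zero
  rw [measure_singleton] at h
  have h2 : cdf (gaussianReal 0 1) x - Function.leftLim (cdf (gaussianReal 0 1)) x ≤ 0 :=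
    ENNReal.ofReal_eq_zero.1 h.symm
  have h3 := (monotone_cdf (gaussianReal 0 1)).leftLim_le (le_refl x)
  rw [(monotone_cdf (gaussianReal 0 1)).continuousAt_iff_leftLim_eq_rightLim]
  rw [StieltjesFunction.rightLim_eq]
  linarith

lemma Phi_PhiInv {p : ℝ} (h0 : 0 < p) (h1 : p < 1) : Phi (PhiInv p) = p := by
  have hb : Filter.Tendsto Phi Filter.atBot (nhds 0) := by
    rw [Phi_eq_cdf]; exact tendsto_cdf_atBot _
  have ht : Filter.Tendsto Phi Filter.atTop (nhds 1) := by
    rw [Phi_eq_cdf]; exact tendsto_cdf_atTop _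
  obtain ⟨a, ha⟩ := (hb.eventually_lt_const h0).exists
  obtain ⟨b, hb'⟩ := (ht.eventually_const_lt h1).exists
  obtain ⟨x, hx⟩ := mem_range_of_exists_le_of_exists_ge Phi_continuous ⟨a, ha.le⟩ ⟨b, hb'.le⟩
  have hbdd : BddBelow {x : ℝ | p ≤ Phi x} := by
    refine ⟨a, fun y hy => ?_⟩
    by_contra hlt
    have := Phi_mono (not_le.1 hlt).le
    simp only [mem_ofPred_eq] at hy
    linarith
  have hcl : IsClosed {x : ℝ | p ≤ Phi x} := isClosed_le continuous_const Phi_continuous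
  have hxm : x ∈ {x : ℝ | p ≤ Phi x} := hx.ge
  apply le_antisymm
  · rw [← hx]
    exact Phi_mono (csInf_le (by rw [hx]; exact hbdd) (by simp))
  · exact hcl.csInf_mem ⟨x, hxm⟩ hbdd

lemma law_sum {k : ℕ} (m a b : Fin k → ℝ) (v : Fin k → NNReal) :
    (Measure.pi fun i => gaussianReal (m i) (v i)).map (fun ω => ∑ i, a i * (ω i - b i)) =
      gaussianReal (∑ i, a i * (m i - b i)) (∑ i, (a i)^2 * (v i : ℝ)).toNNReal := by
  set P := Measure.pi fun i => gaussianReal (m i) (v i) with hP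
  have hlp : ∀ i, MemLp (fun x : ℝ => a i * (x - b i)) 2 (gaussianReal (m i) (v i)) := by
    intro i
    exact (((memLp_id_gaussianReal 2).sub (memLp_const (b i))).const_mul (a i))
  have hi : iIndepFun (fun i (ω : Fin k → ℝ) => a i * (ω i - b i)) P :=
    iIndepFun_pi (X := fun i (x : ℝ) => a i * (x - b i)) (fun i => by fun_prop)
  have hev : ∀ i, HasLaw (fun ω : Fin k → ℝ => ω i) (gaussianReal (m i) (v i)) P := fun i =>
    ⟨(measurable_pi_apply i).aemeasurable, (measurePreserving_eval (fun i => gaussianReal (m i) (v i)) i).map_eq⟩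
  have hl : ∀ i, HasLaw (fun ω : Fin k → ℝ => a i * (ω i - b i))
      (gaussianReal (a i * (m i - b i)) (.mk (a i ^ 2) (sq_nonneg _) * v i)) P := fun i =>
    gaussianReal_const_mul (gaussianReal_sub_const (hev i) (b i)) (a i)
  have hg : HasGaussianLaw (fun ω : Fin k → ℝ => ∑ i, a i * (ω i - b i)) P :=
    iIndepFun.hasGaussianLaw_fun_sum (fun i => (hl i).hasGaussianLaw) hi
  rw [hg.map_eq_gaussianReal]
  congr 1
  · rw [integral_finsetSum]
    · refine Finset.sum_congr rfl fun i _ => ?_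
      rw [(hl i).integral_eq, integral_id_gaussianReal]
    · intro i _
      exact ((hlp i).comp_measurePreserving
        (measurePreserving_eval (fun i => gaussianReal (m i) (v i)) i)).integrable (by norm_num)
  · congr 1
    have := variance_sum_pi hlp
    have e : (∑ i, fun ω : Fin k → ℝ => a i * (ω i - b i)) = fun ω => ∑ i, a i * (ω i - b i) := by
      ext; simp
    rw [← hP, e] at this
    rw [this]
    refine Finset.sum_congr rfl fun i _ => ?_
    rw [variance_const_mul, variance_sub_const (by fun_prop), variance_fun_id_gaussianReal]

lemma gauss_density (m m' s : ℝ) (hs : 0 < s) :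
    gaussianReal m' (s^2).toNNReal = (gaussianReal m (s^2).toNNReal).withDensity
      (fun x => ENNReal.ofReal (exp ((m' - m) / s^2 * (x - m) - (m'-m)^2/(2*s^2)))) := by
  have hv : (s^2).toNNReal ≠ 0 := by simp; positivity
  rw [gaussianReal_of_var_ne_zero _ hv, gaussianReal_of_var_ne_zero _ hv,
    ← withDensity_mul _ (measurable_gaussianPDF _ _) (by fun_prop)]
  congr 1
  ext x
  simp only [Pi.mul_apply, gaussianPDF]
  rw [← ENNReal.ofReal_mul (gaussianPDFReal_nonneg _ _ _)]
  congr 1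
  simp only [gaussianPDFReal]
  rw [mul_assoc (√_)⁻¹, ← exp_add, Real.coe_toNNReal _ (sq_nonneg s)]
  congr 2
  field_simp
  ring

lemma pi_density {k : ℕ} (p q : Fin k → Measure ℝ) [∀ i, IsProbabilityMeasure (p i)]
    [∀ i, IsProbabilityMeasure (q i)]
    (g : Fin k → ℝ → ENNReal) (hg : ∀ i, Measurable (g i))
    (h : ∀ i, q i = (p i).withDensity (g i)) :
    Measure.pi q = (Measure.pi p).withDensity (fun ω => ∏ i, g i (ω i)) := by
  refine (Measure.pi_eq fun s hs => ?_)
  rw [withDensity_apply _ (MeasurableSet.univ_pi hs), ← lintegral_indicator (MeasurableSet.univ_pi hs)]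
  have e : (indicator (univ.pi s) fun ω => ∏ i, g i (ω i)) =
      fun ω : Fin k → ℝ => ∏ i, (indicator (s i) (g i)) (ω i) := by
    ext ω
    by_cases hω : ω ∈ univ.pi s
    · rw [indicator_of_mem hω]
      exact Finset.prod_congr rfl fun i _ => (indicator_of_mem (hω i trivial) _).symm
    · rw [indicator_of_notMem hω]
      simp only [mem_pi, mem_univ, true_implies, not_forall] at hω
      obtain ⟨i, hi⟩ := hω
      exact (Finset.prod_eq_zero (Finset.mem_univ i) (indicator_of_notMem hi _)).symm
  have hm : ∀ i, Measurable (indicator (s i) (g i)) := fun i => (hg i).indicator (hs i)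
  rw [e, lintegral_prod_eq_prod_lintegral_of_indepFun Finset.univ
    (fun i (ω : Fin k → ℝ) => (indicator (s i) (g i)) (ω i))
    (iIndepFun_pi fun i => (hm i).aemeasurable) (fun i => (hm i).comp (measurable_pi_apply i))]
  refine Finset.prod_congr rfl fun i _ => ?_
  rw [h i, withDensity_apply _ (hs i), ← lintegral_indicator (hs i)]
  exact (measurePreserving_eval p i).lintegral_comp (hm i)

lemma np {Ω : Type*} [MeasurableSpace Ω] (P Q : Measure Ω) [IsProbabilityMeasure P]
    [IsProbabilityMeasure Q] (S : Ω → ℝ) (hS : Measurable S) (ν : ℝ) (hν : 0 < ν)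
    (hQ : Q = P.withDensity fun ω => ENNReal.ofReal (exp (ν * S ω - ν^2/2)))
    (hSP : P.map S = gaussianReal 0 1) (hSQ : Q.map S = gaussianReal ν 1)
    (t : ℝ) (φ : Ω → ℝ) (hφ : Measurable φ) (h01 : ∀ ω, φ ω ∈ Icc (0:ℝ) 1)
    (hα : ∫ ω, φ ω ∂P ≤ 1 - Phi t) : Phi (t - ν) ≤ 1 - ∫ ω, φ ω ∂Q := by
  set A : Set Ω := {ω | S ω ≤ t} with hA
  have hAm : MeasurableSet A := measurableSet_le hS measurable_const
  have hPA : P.real A = Phi t := by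
    rw [Phi, ← hSP, Measure.map_apply hS measurableSet_Iic]; rfl
  have hQA : Q.real A = Phi (t - ν) := by
    have e : gaussianReal ν 1 = (gaussianReal 0 1).map (fun x => x + ν) := by
      rw [gaussianReal_map_add_const, zero_add]
    have e1 : Q A = (Q.map S) (Iic t) := by
      rw [Measure.map_apply hS measurableSet_Iic]; rfl
    rw [measureReal_def, e1, hSQ, e, Measure.map_apply (by fun_prop) measurableSet_Iic, Phi]
    congr 2
    ext x
    simp [le_sub_iff_add_le]
  set ψ : Ω → ℝ := fun ω => 1 - A.indicator (fun _ => (1:ℝ)) ω - φ ω with hψ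
  have hint : ∀ (R : Measure Ω) [IsProbabilityMeasure R], Integrable φ R := fun R _ =>
    Integrable.of_bound hφ.aestronglyMeasurable 1
      (ae_of_all _ fun ω => by rw [norm_eq_abs, abs_le]; constructor <;> linarith [(h01 ω).1, (h01 ω).2])
  have hintA : ∀ (R : Measure Ω) [IsProbabilityMeasure R],
      Integrable (A.indicator (fun _ => (1:ℝ))) R := fun R _ =>
    (integrable_const (1:ℝ)).indicator hAm
  have hintψ : ∀ (R : Measure Ω) [IsProbabilityMeasure R], Integrable ψ R := fun R _ =>
    ((integrable_const (1:ℝ)).sub (hintA R)).sub (hint R)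
  have hval : ∀ (R : Measure Ω) [IsProbabilityMeasure R],
      ∫ ω, ψ ω ∂ R = 1 - R.real A - ∫ ω, φ ω ∂ R := fun R _ => by
    have h1 : Integrable (fun ω => 1 - A.indicator (fun _ => (1:ℝ)) ω) R :=
      (integrable_const (1:ℝ)).sub (hintA R)
    simp only [hψ]
    rw [integral_sub h1 (hint R), integral_sub (integrable_const (1:ℝ)) (hintA R), integral_indicator_const _ hAm]
    simp
  set g : Ω → ℝ := fun ω => exp (ν * S ω - ν^2/2) with hg
  have hgm : Measurable fun ω => ENNReal.ofReal (g ω) := by fun_prop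
  have hto : ∀ ω, (ENNReal.ofReal (g ω)).toReal = g ω := fun ω =>
    ENNReal.toReal_ofReal (exp_pos _).le
  have hQψ : ∫ ω, ψ ω ∂Q = ∫ ω, g ω * ψ ω ∂P := by
    rw [hQ, integral_withDensity_eq_integral_toReal_smul hgm (ae_of_all _ fun _ => ENNReal.ofReal_lt_top)]
    simp only [hto, smul_eq_mul]
  have hgi : Integrable (fun ω => g ω * ψ ω) P := by
    have h1 := hintψ Q
    rw [hQ, integrable_withDensity_iff_integrable_smul' hgm
      (ae_of_all _ fun _ => ENNReal.ofReal_lt_top)] at h1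
    simpa only [hto, smul_eq_mul] using h1
  have hle : ∫ ω, exp (ν * t - ν^2/2) * ψ ω ∂P ≤ ∫ ω, g ω * ψ ω ∂P := by
    refine integral_mono ((hintψ P).const_mul _) hgi fun ω => ?_
    by_cases hω : ω ∈ A
    · have h1 : ψ ω ≤ 0 := by simp only [hψ, indicator_of_mem hω]; linarith [(h01 ω).1]
      have h2 : g ω ≤ exp (ν * t - ν^2/2) := by
        have h3 : S ω ≤ t := hω
        exact exp_le_exp.2 (by nlinarith)
      exact mul_le_mul_of_nonpos_right h2 h1
    · have h1 : 0 ≤ ψ ω := by simp only [hψ, indicator_of_notMem hω]; linarith [(h01 ω).2]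
      have h2 : exp (ν * t - ν^2/2) ≤ g ω := by
        have h3 : t < S ω := not_le.1 hω
        exact exp_le_exp.2 (by nlinarith)
      exact mul_le_mul_of_nonneg_right h2 h1
  rw [integral_const_mul, ← hQψ, hval P, hval Q, hPA, hQA] at hle
  have : 0 ≤ exp (ν * t - ν^2/2) * (1 - Phi t - ∫ ω, φ ω ∂P) :=
    mul_nonneg (exp_pos _).le (by linarith)
  linarith

/-- A composition of Gaussian mechanisms satisfying `ρ`-zCDP (with
`ρᵢ = Δᵢ²/(2σᵢ²)` and `Σρᵢ = ρ`) satisfies `√(2ρ)`-GDP. -/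
theorem zcdp_gaussian_composition_gdp {X : Type*} (k : ℕ)
    (f : Fin k → X → ℝ) (Neighbor : X → X → Prop)
    (σ Δ : Fin k → ℝ) (hσ : ∀ i, 0 < σ i)
    (hΔ : ∀ i x x', Neighbor x x' → |f i x - f i x'| ≤ Δ i)
    (ρ : ℝ) (hρ : ∑ i, (Δ i) ^ 2 / (2 * (σ i) ^ 2) = ρ)
    (M : X → Measure (Fin k → ℝ))
    (hM : ∀ x, M x = Measure.pi fun i => gaussianReal (f i x) (((σ i) ^ 2).toNNReal)) :
    IsGDP M Neighbor (Real.sqrt (2 * ρ)) := by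
  intro x x' hN α hα
  have hprob : ∀ y, IsProbabilityMeasure (M y) := fun y => by rw [hM y]; infer_instance
  set ν2 : ℝ := ∑ i, (f i x' - f i x)^2 / (σ i)^2 with hν2
  set ν : ℝ := √ν2 with hν
  have hν2nn : 0 ≤ ν2 := Finset.sum_nonneg fun i _ => by positivity
  have hνsq : ν^2 = ν2 := Real.sq_sqrt hν2nn
  have hνμ : ν ≤ √(2 * ρ) := by
    apply Real.sqrt_le_sqrt
    rw [← hρ, Finset.mul_sum]
    refine Finset.sum_le_sum fun i _ => ?_
    have h1 : (f i x' - f i x)^2 ≤ Δ i ^ 2 := by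
      have h2 := hΔ i x x' hN
      rw [abs_sub_comm] at h2
      rw [← sq_abs]
      exact pow_le_pow_left₀ (abs_nonneg _) h2 2
    have h3 : 2 * (Δ i ^ 2 / (2 * σ i ^ 2)) = Δ i ^ 2 / σ i ^ 2 := by
      have := hσ i
      field_simp
    rw [h3]
    exact div_le_div_of_nonneg_right h1 (sq_nonneg _)
  have hdens : M x' = (M x).withDensity (fun ω => ENNReal.ofReal
      (exp (∑ i, (f i x' - f i x) / (σ i)^2 * (ω i - f i x) - ν2/2))) := by
    rw [hM, hM, pi_density _ _ _ (fun i => by fun_prop)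
      (fun i => gauss_density (f i x) (f i x') (σ i) (hσ i))]
    congr 1
    ext ω
    rw [← ENNReal.ofReal_prod_of_nonneg (fun i _ => (exp_pos _).le), ← exp_sum,
      Finset.sum_sub_distrib, hν2, Finset.sum_div]
    congr 4
    ext i
    rw [div_div, mul_comm (2:ℝ)]
  unfold tradeoff
  refine le_csInf ⟨_, fun _ => 0, measurable_const, fun _ => by simp, by simpa using hα.1, rfl⟩ ?_
  rintro b ⟨φ, hφ, h01, hle, rfl⟩
  have hint : ∀ y, Integrable φ (M y) := fun y =>
    Integrable.of_bound hφ.aestronglyMeasurable 1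
      (ae_of_all _ fun ω => by rw [norm_eq_abs, abs_le]; constructor <;> linarith [(h01 ω).1, (h01 ω).2])
  unfold Gmu
  split_ifs with h0 h1
  · have hz : ∫ ω, φ ω ∂(M x) = 0 :=
      le_antisymm (hle.trans h0) (integral_nonneg fun ω => (h01 ω).1)
    rw [integral_eq_zero_iff_of_nonneg (fun ω => (h01 ω).1) (hint x)] at hz
    have hac : M x' ≪ M x := by rw [hdens]; exact withDensity_absolutelyContinuous _ _
    have hz' : ∫ ω, φ ω ∂(M x') = 0 := by
      rw [integral_congr_ae (hac.ae_le hz)]; simp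
    rw [hz']; simp
  · have h2 : ∫ ω, φ ω ∂(M x') ≤ ∫ _ω, (1:ℝ) ∂(M x') :=
      integral_mono (hint x') (integrable_const _) fun ω => (h01 ω).2
    simp at h2
    linarith
  · push Not at h0 h1
    have ht : Phi (PhiInv (1 - α)) = 1 - α := Phi_PhiInv (by linarith) (by linarith)
    set t := PhiInv (1 - α) with htdef
    refine (Phi_mono (sub_le_sub_left hνμ t)).trans ?_
    rcases (Real.sqrt_nonneg ν2).eq_or_lt with hz | hpos
    · have hz0 : ν2 = 0 := by rw [← hνsq, hν, ← hz]; simp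
      have hzi : ∀ i, f i x' = f i x := by
        intro i
        have h3 := (Finset.sum_eq_zero_iff_of_nonneg
          (fun i _ => by have := hσ i; positivity)).1 hz0 i (Finset.mem_univ i)
        have := hσ i
        have h4 : (f i x' - f i x)^2 = 0 := by
          rcases div_eq_zero_iff.1 h3 with h | h
          · exact h
          · exact absurd h (by positivity)
        exact sub_eq_zero.1 (pow_eq_zero_iff two_ne_zero |>.1 h4)
      have hMe : M x' = M x := by rw [hM, hM]; simp only [hzi]
      have hn0 : ν = 0 := hz.symm
      rw [hMe, hn0, sub_zero, ht]
      linarith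
    · change 0 < ν at hpos
      have hS1 : ∑ i, ((f i x' - f i x) / (σ i)^2 / ν)^2 * (((σ i ^ 2).toNNReal : NNReal) : ℝ) = 1 := by
        have : ∑ i, ((f i x' - f i x) / (σ i)^2 / ν)^2 * (((σ i ^ 2).toNNReal : NNReal) : ℝ)
            = ν2 / ν^2 := by
          rw [hν2, Finset.sum_div]
          refine Finset.sum_congr rfl fun i _ => ?_
          rw [Real.coe_toNNReal _ (sq_nonneg _)]
          have := hσ i
          field_simp
        rw [this, hνsq, div_self]
        rw [← hνsq]; positivity
      refine np (M x) (M x') (fun ω => ∑ i, (f i x' - f i x) / (σ i)^2 / ν * (ω i - f i x))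
        (by fun_prop) ν hpos ?_ ?_ ?_ t φ hφ h01 (by rw [ht]; linarith)
      · rw [hdens]
        congr 1
        ext ω
        rw [hνsq, Finset.mul_sum]
        congr 4
        ext i
        field_simp
      · rw [hM, law_sum, hS1]
        simp
      · rw [hM, law_sum, hS1]
        have : ∑ i, (f i x' - f i x) / (σ i)^2 / ν * (f i x' - f i x) = ν := by
          have h5 : ∑ i, (f i x' - f i x) / (σ i)^2 / ν * (f i x' - f i x) = ν2 / ν := by
            rw [hν2, Finset.sum_div]
            refine Finset.sum_congr rfl fun i _ => ?_
            ring
          rw [h5, ← hνsq]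
          field_simp
        rw [this]
        simp
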